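/- Let n be a positive integer with n not divisible by 3 and ⌊2n/3⌋ ≥ 2. If G is a connected simple graph on n vertices with dissociation number ⌊2n/3⌋ that attains the minimum spectral radius among all connected simple graphs on n vertices with dissociation number ⌊2n/3⌋, then G is isomorphic to the cycle C_n. -/

import Mathlib

/-- `S` is a dissociation set of `G`: the subgraph induced by `S` has maximum degree ≤ 1. -/
def IsDissocSet {V : Type} (G : SimpleGraph V) (S : Set V) : Prop :=
  ∀ v ∈ S, ({u ∈ S | G.Adj v u}).ncard ≤ 1

/-- The dissociation number of `G`: the maximum cardinality of a dissociation set. -/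
noncomputable def dissNum {V : Type} [Fintype V] (G : SimpleGraph V) : ℕ :=
  sSup {k | ∃ S : Set V, IsDissocSet G S ∧ S.ncard = k}

open scoped Classical in
/-- The (real) adjacency matrix of a simple graph. -/
noncomputable def adjMat {V : Type} [Fintype V] (G : SimpleGraph V) : Matrix V V ℝ :=
  Matrix.of fun i j => if G.Adj i j then 1 else 0

/-- The spectral radius of a simple graph: the largest eigenvalue of its adjacency matrix. -/
noncomputable def specRad {V : Type} [Fintype V] (G : SimpleGraph V) : ℝ :=
  sSup {t : ℝ | ∃ v : V → ℝ, v ≠ 0 ∧ (adjMat G).mulVec v = t • v}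

/-!
The cycle `C_n` has dissociation number `⌊2n/3⌋` and spectral radius at most `2`, so a minimiser `G`
has `ρ(G) ≤ 2`. A forest on `n` vertices has dissociation number at least `2n/3`: pruning it at the
end of a longest path removes at most three vertices for every two that enter the dissociation set.
As `3 ∤ n`, the connected graph `G` is therefore not a tree, so it has at least `n` edges and
average degree at least `2 ≥ ρ(G)`. The average degree never exceeds `ρ(G)`, and equality forces
`G` to be regular; a connected `2`-regular graph is a cycle.
-/

section DissociationNumber

open Finset SimpleGraph

variable {V W : Type} {G : SimpleGraph V} {H : SimpleGraph W} {S T : Set V}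

/-- The closed neighbourhood `N[T]` of a set of vertices: the members of `T` and all their
neighbours. -/
def closedNeighborhood {V : Type*} (G : SimpleGraph V) (T : Set V) : Set V :=
  {v | v ∈ T ∨ ∃ u ∈ T, G.Adj u v}

theorem subset_closedNeighborhood {V : Type*} {G : SimpleGraph V} {T : Set V} :
    T ⊆ closedNeighborhood G T := fun _ ↦ Or.inl

theorem isDissocSet_iff [Finite V] :
    IsDissocSet G S ↔ ∀ v ∈ S, ∀ a ∈ S, ∀ b ∈ S, G.Adj v a → G.Adj v b → a = b := by
  refine forall₂_congr fun v _ ↦ ?_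
  rw [Set.ncard_le_one_iff]
  simp only [Set.mem_ofPred_eq]
  grind

namespace IsDissocSet

theorem image (f : H ↪g G) {S : Set W} (hS : IsDissocSet H S) : IsDissocSet G (f '' S) := by
  rintro _ ⟨v, hv, rfl⟩
  have hnbr : {u ∈ f '' S | G.Adj (f v) u} = f '' {u ∈ S | H.Adj v u} := by
    ext
    aesop
  rw [hnbr, Set.ncard_image_of_injective _ f.injective]
  exact hS v hv

theorem union (hS : IsDissocSet G S) (hT : IsDissocSet G T)
    (hST : ∀ u ∈ S, ∀ v ∈ T, ¬ G.Adj u v) : IsDissocSet G (S ∪ T) := by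
  rintro v (hv | hv)
  · have hnbr : {u ∈ S ∪ T | G.Adj v u} = {u ∈ S | G.Adj v u} := by grind
    exact hnbr ▸ hS v hv
  · have hnbr : {u ∈ S ∪ T | G.Adj v u} = {u ∈ T | G.Adj v u} := by grind [G.adj_comm]
    exact hnbr ▸ hT v hv

end IsDissocSet

theorem IsDissocSet.ncard_mul_le_ncard_compl_mul [Finite V] [G.LocallyFinite] (hS : IsDissocSet G S)
    {d D : ℕ} (hd : ∀ v ∈ S, d + 1 ≤ G.degree v) (hD : ∀ v ∉ S, G.degree v ≤ D) :
    S.ncard * d ≤ Sᶜ.ncard * D := by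
  classical
  have := Fintype.ofFinite V
  -- Double count the edges between `S` and its complement: a vertex of `S` has at most one
  -- neighbour inside `S`.
  rw [Set.ncard_eq_toFinset_card', Set.ncard_eq_toFinset_card']
  refine card_mul_le_card_mul G.Adj (fun v hv ↦ ?_) (fun v hv ↦ ?_)
  · rw [Set.mem_toFinset] at hv
    have hin : #{u ∈ G.neighborFinset v | u ∈ S} ≤ 1 := by
      convert hS v hv using 1
      rw [Set.ncard_eq_toFinset_card']
      congr 1
      grind [mem_neighborFinset]
    have hout : bipartiteAbove G.Adj Sᶜ.toFinset v = {u ∈ G.neighborFinset v | u ∉ S} := by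
      grind [mem_neighborFinset, mem_bipartiteAbove]
    have hsplit := card_filter_add_card_filter_not (s := G.neighborFinset v) (· ∈ S)
    rw [card_neighborFinset_eq_degree] at hsplit
    have := hd v hv
    rw [hout]
    lia
  · refine (card_le_card fun u hu ↦ ?_).trans (hD v (by simpa using hv))
    grind [mem_neighborFinset, mem_bipartiteBelow, G.adj_comm]

theorem bddAbove_ncard_isDissocSet [Finite V] :
    BddAbove {k | ∃ S : Set V, IsDissocSet G S ∧ S.ncard = k} :=
  ⟨Nat.card V, by rintro _ ⟨S, -, rfl⟩; exact Set.ncard_le_card S⟩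

variable [Fintype V]

theorem IsDissocSet.ncard_le_dissNum (hS : IsDissocSet G S) : S.ncard ≤ dissNum G :=
  le_csSup bddAbove_ncard_isDissocSet ⟨S, hS, rfl⟩

theorem exists_isDissocSet_ncard_eq_dissNum (G : SimpleGraph V) :
    ∃ S : Set V, IsDissocSet G S ∧ S.ncard = dissNum G := by
  have hne : {k | ∃ S : Set V, IsDissocSet G S ∧ S.ncard = k}.Nonempty :=
    ⟨0, ∅, by simp [IsDissocSet], by simp⟩
  exact Nat.sSup_mem hne bddAbove_ncard_isDissocSet

theorem IsDissocSet.dissNum_induce_compl_add_ncard_le (hT : IsDissocSet G T)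
    [Fintype ((closedNeighborhood G T)ᶜ : Set V)] :
    dissNum (G.induce (closedNeighborhood G T)ᶜ) + T.ncard ≤ dissNum G := by
  obtain ⟨S, hS, hcard⟩ :=
    exists_isDissocSet_ncard_eq_dissNum (G.induce (closedNeighborhood G T)ᶜ)
  have hout : ∀ v ∈ Subtype.val '' S, v ∉ closedNeighborhood G T := by
    rintro _ ⟨w, -, rfl⟩
    exact w.2
  have hdisj : Disjoint (Subtype.val '' S) T :=
    Set.disjoint_left.2 fun v hv hvT ↦ hout v hv (subset_closedNeighborhood hvT)
  have hnadj : ∀ u ∈ Subtype.val '' S, ∀ v ∈ T, ¬ G.Adj u v :=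
    fun u hu v hv h ↦ hout u hu (Or.inr ⟨v, hv, h.symm⟩)
  rw [← hcard, ← Set.ncard_image_of_injective S Subtype.val_injective, ← Set.ncard_union_eq hdisj]
  exact ((hS.image (Embedding.induce _)).union hT hnadj).ncard_le_dissNum

end DissociationNumber

section Acyclic

open SimpleGraph

theorem eq_snd_of_adj_of_forall_isPath_length_le {V : Type*} {G : SimpleGraph V} (hG : G.IsAcyclic)
    {u v w : V} {p : G.Walk u v} (hp : p.IsPath)
    (hmax : ∀ (x y : V) (q : G.Walk x y), q.IsPath → q.length ≤ p.length) (hw : G.Adj u w) :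
    w = p.snd := by
  refine hG.eq_snd_of_adj_start hp hw (by_contra fun hwp ↦ ?_)
  have := hmax _ _ (p.cons hw.symm) (hp.cons hwp)
  simp at this

theorem exists_forall_adj_ne_leaf {V : Type*} {G : SimpleGraph V} [Finite V] (hG : G.IsAcyclic)
    (hE : G ≠ ⊥) :
    ∃ q p, (∃ x, G.Adj q x ∧ x ≠ p) ∧ ∀ x, G.Adj q x → x ≠ p → ∀ y, G.Adj x y → y = q := by
  obtain ⟨a, b, hab⟩ := ne_bot_iff_exists_adj.1 hE
  have : Nonempty V := ⟨a⟩
  -- Take a longest path `u, q, p, …`: replacing `u` by any other neighbour of `q` except `p` yields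
  -- another longest path, so that neighbour is a leaf too.
  obtain ⟨u, v, P, hP, hmax⟩ := Walk.exists_isPath_forall_isPath_length_le_length G
  cases P with
  | nil => simpa using hmax _ _ hab.toWalk (Walk.IsPath.of_adj hab)
  | @cons _ q _ huq P =>
    obtain ⟨hP, hu⟩ := (Walk.cons_isPath_iff _ _).1 hP
    have hup : u ≠ P.snd := fun h ↦ hu (h ▸ P.getVert_mem_support 1)
    refine ⟨q, P.snd, ⟨u, huq.symm, hup⟩, fun x hqx hxp y hxy ↦ ?_⟩
    have hx : x ∉ P.support := fun hx ↦ hxp (hG.eq_snd_of_adj_start hP hqx hx)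
    simpa using eq_snd_of_adj_of_forall_isPath_length_le hG (hP.cons hx) (hw := hxy)
      (p := P.cons hqx.symm) hmax

theorem not_isAcyclic_of_two_le_degree {V : Type*} {G : SimpleGraph V} [Finite V] [Nonempty V]
    [G.LocallyFinite] (hdeg : ∀ v, 2 ≤ G.degree v) : ¬ G.IsAcyclic := by
  intro hG
  obtain ⟨v⟩ := ‹Nonempty V›
  obtain ⟨w, hvw⟩ := (G.degree_pos_iff_exists_adj v).1 (by linarith [hdeg v])
  obtain ⟨q, p, ⟨x, hqx, hxp⟩, hleaf⟩ :=
    exists_forall_adj_ne_leaf hG (ne_bot_iff_exists_adj.2 ⟨v, w, hvw⟩)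
  have hsub : G.neighborFinset x ⊆ {q} := fun y hy ↦
    Finset.mem_singleton.2 (hleaf x hqx hxp y ((G.mem_neighborFinset x y).1 hy))
  have hle := Finset.card_le_card hsub
  rw [card_neighborFinset_eq_degree, Finset.card_singleton] at hle
  linarith [hdeg x]

theorem exists_isDissocSet_two_mul_ncard_closedNeighborhood_le {V : Type} [Finite V] [Nonempty V]
    {G : SimpleGraph V} (hG : G.IsAcyclic) :
    ∃ T, T.Nonempty ∧ IsDissocSet G T ∧ 2 * (closedNeighborhood G T).ncard ≤ 3 * T.ncard := by
  obtain rfl | hE := eq_or_ne G ⊥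
  · inhabit V
    refine ⟨{default}, by simp, by simp [isDissocSet_iff], ?_⟩
    simp [closedNeighborhood]
  obtain ⟨q, p, ⟨x, hqx, hxp⟩, hleaf⟩ := exists_forall_adj_ne_leaf hG hE
  by_cases hx : ∀ y, G.Adj q y → y ≠ p → y = x
  · refine ⟨{q, x}, by simp, isDissocSet_iff.2 (by grind [G.irrefl]), ?_⟩
    have hN : closedNeighborhood G {q, x} ⊆ {q, x, p} := by
      grind [closedNeighborhood]
    calc 2 * (closedNeighborhood G {q, x}).ncard ≤ 2 * ({q, x, p} : Set V).ncard :=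
          Nat.mul_le_mul_left 2 (Set.ncard_le_ncard hN)
      _ ≤ 3 * 2 := by linarith [Set.ncard_insert_le q {x, p}, Set.ncard_pair hxp]
      _ = 3 * ({q, x} : Set V).ncard := by rw [Set.ncard_pair hqx.ne]
  · push Not at hx
    obtain ⟨y, hqy, hyp, hyx⟩ := hx
    have hxL : x ∈ G.neighborSet q \ {p} := ⟨hqx, hxp⟩
    refine ⟨G.neighborSet q \ {p}, ⟨x, hxL⟩, isDissocSet_iff.2 (by grind [mem_neighborSet]), ?_⟩
    have hN : closedNeighborhood G (G.neighborSet q \ {p}) ⊆ insert q (G.neighborSet q \ {p}) := by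
      grind [closedNeighborhood, mem_neighborSet]
    have htwo : 1 < (G.neighborSet q \ {p}).ncard :=
      (Set.one_lt_ncard).2 ⟨x, hxL, y, ⟨hqy, hyp⟩, hyx.symm⟩
    have hcard := (Set.ncard_le_ncard hN).trans (Set.ncard_insert_le q _)
    lia

theorem two_mul_card_le_three_mul_dissNum_of_isAcyclic {V : Type} [Fintype V] {G : SimpleGraph V}
    (hG : G.IsAcyclic) : 2 * Fintype.card V ≤ 3 * dissNum G := by
  classical
  induction hn : Fintype.card V using Nat.strong_induction_on generalizing V with
  | _ n ih =>
  subst hn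
  cases isEmpty_or_nonempty V
  · simp
  obtain ⟨T, hne, hT, hcard⟩ := exists_isDissocSet_two_mul_ncard_closedNeighborhood_le hG
  have hcompl := Set.ncard_add_ncard_compl (closedNeighborhood G T)
  have hTpos := (Set.ncard_pos T.toFinite).2 hne
  have hsub := Set.ncard_le_ncard (subset_closedNeighborhood (G := G) (T := T))
  rw [← Nat.card_coe_set_eq _ᶜ, Nat.card_eq_fintype_card, Nat.card_eq_fintype_card] at hcompl
  have hrest := ih _ (by lia) (hG.induce (closedNeighborhood G T)ᶜ) rfl
  have hdiss := hT.dissNum_induce_compl_add_ncard_le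
  lia

end Acyclic

section SpectralRadius

open Finset SimpleGraph Matrix

open scoped MatrixOrder

variable {V : Type} [Fintype V] {G : SimpleGraph V} [DecidableRel G.Adj]

theorem mem_spectrum_iff_exists_mulVec_eq {ι K : Type*} [Fintype ι] [DecidableEq ι] [Field K]
    {A : Matrix ι ι K} {t : K} : t ∈ spectrum K A ↔ ∃ v ≠ 0, A *ᵥ v = t • v := by
  rw [← spectrum_toLin', ← Module.End.hasEigenvalue_iff_mem_spectrum]
  constructor
  · intro ht
    obtain ⟨v, hv⟩ := ht.exists_hasEigenvector
    exact ⟨v, hv.2, by simpa using hv.apply_eq_smul⟩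
  · rintro ⟨v, hv, h⟩
    exact Module.End.hasEigenvalue_of_hasEigenvector (Module.End.hasEigenvector_iff.2
      ⟨Module.End.mem_eigenspace_iff.2 (by simpa using h), hv⟩)

theorem adjMat_eq_adjMatrix : adjMat G = G.adjMatrix ℝ := by
  ext u v
  simp [adjMat, adjMatrix_apply]

theorem specRad_eq_sSup_spectrum [DecidableEq V] :
    specRad G = sSup (spectrum ℝ (G.adjMatrix ℝ)) := by
  refine congrArg sSup (Set.ext fun t ↦ ?_)
  rw [mem_spectrum_iff_exists_mulVec_eq, ← adjMat_eq_adjMatrix, Set.mem_ofPred_eq]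

theorem specRad_le_of_degree_le {d : ℕ} (hd : ∀ v, G.degree v ≤ d) : specRad G ≤ d := by
  classical
  rw [specRad_eq_sSup_spectrum]
  refine Real.sSup_le (fun t ht ↦ ?_) d.cast_nonneg
  rw [← spectrum_toLin', ← Module.End.hasEigenvalue_iff_mem_spectrum] at ht
  obtain ⟨v, hv⟩ := eigenvalue_mem_ball ht
  calc t ≤ ‖t‖ := Real.le_norm_self t
    _ ≤ ∑ u ∈ univ.erase v, ‖G.adjMatrix ℝ v u‖ := by simpa using hv
    _ ≤ ∑ u, ‖G.adjMatrix ℝ v u‖ := sum_le_sum_of_subset_of_nonneg (erase_subset _ _) (by simp)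
    _ = G.degree v := by simp [adjMatrix_apply, apply_ite, ← neighborFinset_eq_filter]
    _ ≤ d := mod_cast hd v

theorem posSemidef_smul_one_sub_adjMatrix [DecidableEq V] {c : ℝ} (hc : specRad G ≤ c) :
    (c • (1 : Matrix V V ℝ) - G.adjMatrix ℝ).PosSemidef := by
  have hA : IsSelfAdjoint (G.adjMatrix ℝ) := G.isSymm_adjMatrix
  rw [← Algebra.algebraMap_eq_smul_one, ← Matrix.le_iff, le_algebraMap_iff_spectrum_le hA]
  rw [specRad_eq_sSup_spectrum] at hc
  exact fun t ht ↦ (le_csSup (finite_spectrum _).bddAbove ht).trans hc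

theorem degree_eq_of_specRad_le {c : ℝ} (hc : specRad G ≤ c)
    (hE : c * Fintype.card V ≤ 2 * #G.edgeFinset) (v : V) : (G.degree v : ℝ) = c := by
  classical
  -- The quadratic form of `c • 1 - A` is nonnegative, and nonpositive at the all-ones vector, which
  -- therefore lies in the kernel.
  have hpos := posSemidef_smul_one_sub_adjMatrix hc
  have hmul (u : V) : ((c • (1 : Matrix V V ℝ) - G.adjMatrix ℝ) *ᵥ 1) u = c - G.degree u := by
    simp [sub_mulVec, smul_mulVec]
  have hform : star 1 ⬝ᵥ ((c • (1 : Matrix V V ℝ) - G.adjMatrix ℝ) *ᵥ 1) ≤ 0 := by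
    have hdeg : ∑ u, (G.degree u : ℝ) = 2 * #G.edgeFinset :=
      mod_cast G.sum_degrees_eq_twice_card_edges
    simp only [dotProduct, hmul, star_one, Pi.one_apply, one_mul, sum_sub_distrib, hdeg, sum_const,
      card_univ, nsmul_eq_mul]
    linarith
  have hker := (hpos.dotProduct_mulVec_zero_iff 1).1
    (hform.antisymm (hpos.dotProduct_mulVec_nonneg 1))
  have := congrFun hker v
  rw [hmul, Pi.zero_apply] at this
  linarith

end SpectralRadius

section Cycle

open Finset SimpleGraph

theorem ncard_setOf_not_three_dvd (n : ℕ) : {i : Fin n | ¬ 3 ∣ (i : ℕ)}.ncard = 2 * n / 3 := by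
  simp only [Set.ncard_eq_toFinset_card', Set.toFinset_ofPred, card_filter]
  rw [Fin.sum_univ_eq_sum_range fun i ↦ if ¬ 3 ∣ i then 1 else 0]
  induction n with
  | zero => rfl
  | succ n ih =>
    rw [sum_range_succ, ih]
    grind

variable {n : ℕ}

theorem val_eq_add_one_of_val_sub_eq_one {i j : Fin n} (h : (i - j).val = 1) (hi : i.val ≠ 0) :
    i.val = j.val + 1 := by
  obtain hji | hij := le_or_gt j i
  · rw [Fin.coe_sub_iff_le.2 hji] at h
    lia
  · rw [Fin.coe_sub_iff_lt.2 hij] at h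
    lia

theorem val_eq_add_one_of_adj_cycleGraph {i j : Fin n} (h : (cycleGraph n).Adj i j)
    (hi : i.val ≠ 0) (hj : j.val ≠ 0) : i.val = j.val + 1 ∨ j.val = i.val + 1 :=
  (cycleGraph_adj'.1 h).imp (val_eq_add_one_of_val_sub_eq_one · hi)
    (val_eq_add_one_of_val_sub_eq_one · hj)

theorem isDissocSet_cycleGraph_setOf_not_three_dvd :
    IsDissocSet (cycleGraph n) {i : Fin n | ¬ 3 ∣ (i : ℕ)} := by
  refine isDissocSet_iff.2 fun v hv a ha b hb hva hvb ↦ ?_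
  have := val_eq_add_one_of_adj_cycleGraph hva (by grind) (by grind)
  have := val_eq_add_one_of_adj_cycleGraph hvb (by grind) (by grind)
  simp only [Set.mem_ofPred_eq] at hv ha hb
  lia

theorem dissNum_cycleGraph (hn : 3 ≤ n) : dissNum (cycleGraph n) = 2 * n / 3 := by
  obtain ⟨m, rfl⟩ := Nat.exists_eq_add_of_le' hn
  obtain ⟨S, hS, hcard⟩ := exists_isDissocSet_ncard_eq_dissNum (cycleGraph (m + 3))
  have hcount : S.ncard * 1 ≤ Sᶜ.ncard * 2 :=
    hS.ncard_mul_le_ncard_compl_mul (fun _ _ ↦ cycleGraph_degree_three_le.ge)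
      (fun _ _ ↦ cycleGraph_degree_three_le.le)
  have hcompl := Set.ncard_add_ncard_compl S
  rw [Nat.card_fin] at hcompl
  have hlower := (isDissocSet_cycleGraph_setOf_not_three_dvd (n := m + 3)).ncard_le_dissNum
  rw [ncard_setOf_not_three_dvd] at hlower
  lia

theorem specRad_cycleGraph_le_two (hn : 3 ≤ n) : specRad (cycleGraph n) ≤ 2 := by
  obtain ⟨m, rfl⟩ := Nat.exists_eq_add_of_le' hn
  exact specRad_le_of_degree_le (d := 2) fun _ ↦ cycleGraph_degree_three_le.le

end Cycle

section Isomorphism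

open SimpleGraph Function

variable {V W : Type*} {G : SimpleGraph V} {H : SimpleGraph W}

theorem exists_adj_of_copy_of_degree_le [G.LocallyFinite] [H.LocallyFinite] (f : H.Copy G) {w : W}
    (hdeg : G.degree (f w) ≤ H.degree w) {v : V} (hv : G.Adj (f w) v) :
    ∃ u, H.Adj w u ∧ f u = v := by
  classical
  have hsub : (H.neighborFinset w).image f ⊆ G.neighborFinset (f w) := by
    intro y hy
    obtain ⟨u, hu, rfl⟩ := Finset.mem_image.1 hy
    rw [mem_neighborFinset] at hu ⊢
    exact f.toHom.map_adj hu
  have hinj : Injective f := f.injective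
  have heq := Finset.eq_of_subset_of_card_le hsub (by
    rwa [Finset.card_image_of_injective _ hinj])
  have : v ∈ (H.neighborFinset w).image f := by simpa [heq] using hv
  simpa using this

theorem nonempty_iso_of_copy_of_degree_le [G.LocallyFinite] [H.LocallyFinite] [Nonempty W]
    (hG : G.Preconnected) (f : H.Copy G) (hdeg : ∀ w, G.degree (f w) ≤ H.degree w) :
    Nonempty (H ≃g G) := by
  have hlift (w : W) {v : V} (hv : G.Adj (f w) v) : ∃ u, H.Adj w u ∧ f u = v :=
    exists_adj_of_copy_of_degree_le f (hdeg w) hv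
  have hsurj : Surjective f := by
    intro v
    have hreach : Relation.ReflTransGen G.Adj (f (Classical.arbitrary W)) v :=
      (reachable_iff_reflTransGen _ _).1 (hG _ v)
    induction hreach with
    | refl => exact ⟨_, rfl⟩
    | tail _ hadj ih =>
      obtain ⟨w, rfl⟩ := ih
      obtain ⟨u, -, hu⟩ := hlift w hadj
      exact ⟨u, hu⟩
  refine ⟨⟨Equiv.ofBijective f ⟨f.injective, hsurj⟩, fun {w u} ↦ ⟨fun h ↦ ?_, f.toHom.map_adj⟩⟩⟩
  obtain ⟨u', hu', he⟩ := hlift w h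
  rwa [← f.injective he]

theorem nonempty_iso_cycleGraph_of_isRegularOfDegree_two [Finite V] [G.LocallyFinite]
    (hconn : G.Connected) (hdeg : G.IsRegularOfDegree 2) :
    Nonempty (G ≃g cycleGraph (Nat.card V)) := by
  have := hconn.nonempty
  have hG := not_isAcyclic_of_two_le_degree fun v ↦ (hdeg v).ge
  simp only [isAcyclic_iff_free_cycleGraph, not_forall, Free, not_not] at hG
  obtain ⟨m, hm, ⟨f⟩⟩ := hG
  obtain ⟨k, rfl⟩ := Nat.exists_eq_add_of_le' hm
  obtain ⟨e⟩ := nonempty_iso_of_copy_of_degree_le hconn.preconnected f fun w ↦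
    (hdeg (f w)).le.trans cycleGraph_degree_three_le.ge
  rw [← Nat.card_congr e.toEquiv, Nat.card_fin]
  exact ⟨e.symm⟩

end Isomorphism

theorem card_le_card_edgeFinset_of_not_isAcyclic {V : Type*} [Fintype V] {G : SimpleGraph V}
    [Fintype G.edgeSet] (hconn : G.Connected) (hG : ¬ G.IsAcyclic) :
    Fintype.card V ≤ G.edgeFinset.card := by
  have hne : Nat.card G.edgeSet + 1 ≠ Nat.card V :=
    fun h ↦ hG (SimpleGraph.isTree_iff_connected_and_card.2 ⟨hconn, h⟩).isAcyclic
  have hle := hconn.card_vert_le_card_edgeSet_add_one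
  rw [Nat.card_eq_fintype_card, Nat.card_eq_fintype_card, ← SimpleGraph.edgeFinset_card]
    at hne hle
  lia

theorem minimum_spectral_radius_diss_eq_floor_two_thirds_general {V : Type} [Fintype V]
    {G : SimpleGraph V} (hconn : G.Connected) (hdiss : 3 * dissNum G < 2 * Fintype.card V)
    (hrad : specRad G ≤ 2) : Nonempty (G ≃g SimpleGraph.cycleGraph (Fintype.card V)) := by
  classical
  have hcyc : ¬ G.IsAcyclic :=
    fun h ↦ hdiss.not_ge (two_mul_card_le_three_mul_dissNum_of_isAcyclic h)
  have hedges : (2 * Fintype.card V : ℝ) ≤ 2 * G.edgeFinset.card :=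
    mod_cast Nat.mul_le_mul_left 2 (card_le_card_edgeFinset_of_not_isAcyclic hconn hcyc)
  have hreg : G.IsRegularOfDegree 2 := fun v ↦ mod_cast degree_eq_of_specRad_le hrad hedges v
  exact Nat.card_eq_fintype_card (α := V) ▸
    nonempty_iso_cycleGraph_of_isRegularOfDegree_two hconn hreg

/-- If `3 ∤ n` and a connected graph `G` of order `n` with dissociation number
`⌊2n/3⌋ ≥ 2` attains the minimum spectral radius among all connected graphs of order `n`
with dissociation number `⌊2n/3⌋`, then `G` is isomorphic to the cycle `C_n`. -/
theorem minimum_spectral_radius_diss_eq_floor_two_thirds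
    {n : ℕ} (hn : 0 < n) (hmod : ¬ (3 ∣ n)) (hk : 2 ≤ 2 * n / 3)
    {V : Type} [Fintype V] (G : SimpleGraph V)
    (hcard : Fintype.card V = n) (hconn : G.Connected)
    (hdiss : dissNum G = 2 * n / 3)
    (hmin : ∀ H : SimpleGraph (Fin n), H.Connected → dissNum H = 2 * n / 3 →
      specRad G ≤ specRad H) :
    Nonempty (G ≃g SimpleGraph.cycleGraph n) := by
  obtain ⟨m, rfl⟩ : ∃ m, n = m + 3 := ⟨n - 3, by lia⟩
  have hrad : specRad G ≤ 2 :=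
    (hmin _ SimpleGraph.cycleGraph_connected (dissNum_cycleGraph (by lia))).trans
      (specRad_cycleGraph_le_two (by lia))
  exact hcard ▸ minimum_spectral_radius_diss_eq_floor_two_thirds_general hconn (by lia) hrad
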